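/- arXiv:2502.17809 — 4 statements merged into one kernel-verified Lean document; each statement's English description precedes it below -/
import Mathlib

section
/- For every number of products m ≥ 1 and every value distribution f on ℝ_{≥0}^m with finite support, there exist a coarse horizontal disclosure σ with finite signal space S and a price p ∈ ℝ_{≥0} with p ≥ (1/2)·E[max_{i∈[m]} v_i] such that for every signal s with r(s) > 0 one has max_{i∈[m]} ν_i(s) ≥ p. Consequently, the uniform pricing mechanism that posts price p on every product sells a product with probability one, and its revenue p is at least half of the optimal welfare E[max_i v_i], hence at least half of the revenue of any IC-IR mechanism. -/
open Finset

noncomputable section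

namespace Screening

variable {m : ℕ} {ι : Type}

/-- The ex-ante probability of signal `s` under information structure `σ`. -/
def sigR (V : Finset (Fin m → ℝ)) (f : (Fin m → ℝ) → ℝ)
    (σ : (Fin m → ℝ) → ι → ℝ) (s : ι) : ℝ :=
  ∑ v ∈ V, f v * σ v s

/-- The posterior mean value of product `i` upon receiving signal `s`. -/
def post (V : Finset (Fin m → ℝ)) (f : (Fin m → ℝ) → ℝ)
    (σ : (Fin m → ℝ) → ι → ℝ) (s : ι) (i : Fin m) : ℝ :=
  (∑ v ∈ V, f v * σ v s * v i) / sigR V f σ s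

/-- `σ` is an information structure with finite signal space `S`. -/
def IsInfo (V : Finset (Fin m → ℝ)) (S : Finset ι)
    (σ : (Fin m → ℝ) → ι → ℝ) : Prop :=
  ∀ v ∈ V, (∀ s, 0 ≤ σ v s) ∧ (∀ s, s ∉ S → σ v s = 0) ∧ (∑ s ∈ S, σ v s = 1)

/-- `x` is a feasible (random, unit-demand) allocation rule on `S`. -/
def IsAlloc (S : Finset ι) (x : ι → Fin m → ℝ) : Prop :=
  ∀ s ∈ S, (∀ i, 0 ≤ x s i) ∧ (∀ i, x s i ≤ 1) ∧ (∑ i, x s i ≤ 1)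

/-- Incentive compatibility. -/
def IC (V : Finset (Fin m → ℝ)) (f : (Fin m → ℝ) → ℝ) (S : Finset ι)
    (σ : (Fin m → ℝ) → ι → ℝ) (x : ι → Fin m → ℝ) (p : ι → ℝ) : Prop :=
  ∀ s ∈ S, 0 < sigR V f σ s → ∀ s' ∈ S,
    (∑ i, post V f σ s i * x s' i) - p s' ≤ (∑ i, post V f σ s i * x s i) - p s

/-- Individual rationality. -/
def IR (V : Finset (Fin m → ℝ)) (f : (Fin m → ℝ) → ℝ) (S : Finset ι)
    (σ : (Fin m → ℝ) → ι → ℝ) (x : ι → Fin m → ℝ) (p : ι → ℝ) : Prop :=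
  ∀ s ∈ S, 0 < sigR V f σ s → 0 ≤ (∑ i, post V f σ s i * x s i) - p s

/-- Expected revenue of a mechanism. -/
def Rev (V : Finset (Fin m → ℝ)) (f : (Fin m → ℝ) → ℝ) (S : Finset ι)
    (σ : (Fin m → ℝ) → ι → ℝ) (p : ι → ℝ) : ℝ :=
  ∑ s ∈ S, sigR V f σ s * p s

/-- Nonemptiness of `Fin m` as a finset, given `0 < m`. -/
lemma univNe (hm : 0 < m) : (univ : Finset (Fin m)).Nonempty :=
  univ_nonempty_iff.mpr (Fin.pos_iff_nonempty.mp hm)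

/-- The maximum value `max_i v_i`. -/
def vmax (hm : 0 < m) (v : Fin m → ℝ) : ℝ :=
  univ.sup' (univNe hm) v

/-- The smallest-index maximizing coordinate of `v`. -/
def istar (hm : 0 < m) (v : Fin m → ℝ) : Fin m :=
  (univ.filter (fun i => ∀ j, v j ≤ v i)).min' (by
    obtain ⟨i, -, hi⟩ := Finset.exists_max_image (univ : Finset (Fin m)) v (univNe hm)
    exact ⟨i, mem_filter.mpr ⟨mem_univ _, fun j => hi j (mem_univ _)⟩⟩)

/-- The probability that product `i` is the (selected) highest-value product. -/
def probTop (V : Finset (Fin m → ℝ)) (f : (Fin m → ℝ) → ℝ)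
    (top : (Fin m → ℝ) → Fin m) (i : Fin m) : ℝ :=
  ∑ v ∈ V.filter (fun v => top v = i), f v

/-- The posterior mean value of product `j` conditional on `i` being the highest-value
product (i.e. conditional on the horizontal-disclosure signal `i`). -/
def condMean (V : Finset (Fin m → ℝ)) (f : (Fin m → ℝ) → ℝ)
    (top : (Fin m → ℝ) → Fin m) (i j : Fin m) : ℝ :=
  (∑ v ∈ V.filter (fun v => top v = i), f v * v j) / probTop V f top i

/-!
Let `qᵢ` be the probability that `i` is the top product and `aᵢ = E[vᵢ; i is top]`, so that
`∑ qᵢ = 1` and `∑ aᵢ` is the optimal welfare `W`. Fix the price `p = W / 2`. Disclosing only that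
`i` is top would sell `i` at price `p` exactly when its surplus `aᵢ - p qᵢ` is nonnegative; call
such products strong. Since the weak products have negative surplus, the strong ones have total
surplus at least `∑ (aᵢ - p qᵢ) = W - p = p`, which is enough to absorb the whole mass of the weak
products even if these contributed no value. So whenever a weak product is top, the disclosure
recommends a strong product drawn with probability proportional to its surplus, through the signal
that the top product is either this one or some weak one.
-/

/-- A coarse horizontal disclosure on a set `α` of products: `τ i` is the distribution of the
signal sent when `i` is the top product, and `S` is the finite signal space. -/
structure IsCoarseDisclosure {α : Type*} (S : Finset (Finset α)) (τ : α → Finset α → ℝ) :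
    Prop where
  nonempty : ∀ s ∈ S, s.Nonempty
  distribution : ∀ i, (∀ s, 0 ≤ τ i s) ∧ (∀ s, s ∉ S → τ i s = 0) ∧ ∑ s ∈ S, τ i s = 1
  mem : ∀ i s, 0 < τ i s → i ∈ s

section Pooling

variable {α : Type*} (q a : α → ℝ) (p : ℝ)

/-- The surplus at price `p` of a product that is top with probability `q k` and then contributes
`a k` to the welfare. -/
def surplus (k : α) : ℝ := a k - p * q k

variable [Fintype α]

/-- The products of nonnegative surplus, i.e. those that sell at price `p` when the buyer learns
only that they are top. -/
def strong : Finset α := {k | 0 ≤ surplus q a p k}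

/-- The total surplus of the strong products. -/
def totalSurplus : ℝ := ∑ k ∈ strong q a p, surplus q a p k

variable {q a p} {j k : α}

lemma mem_strong : k ∈ strong q a p ↔ 0 ≤ surplus q a p k := by
  simp [strong]

lemma totalSurplus_nonneg : 0 ≤ totalSurplus q a p :=
  sum_nonneg fun _ hk => mem_strong.1 hk

lemma totalSurplus_eq_sum_max : totalSurplus q a p = ∑ k, max (surplus q a p k) 0 := by
  rw [totalSurplus, strong, sum_filter]
  refine sum_congr rfl fun k _ => ?_
  split_ifs with hk
  · exact (max_eq_left hk).symm
  · exact (max_eq_right (not_le.1 hk).le).symm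

lemma sum_surplus_le_totalSurplus : ∑ k, surplus q a p k ≤ totalSurplus q a p := by
  rw [totalSurplus_eq_sum_max]
  exact sum_le_sum fun _ _ => le_max_left _ _

lemma sum_surplus_lt_totalSurplus (hj : j ∉ strong q a p) :
    ∑ k, surplus q a p k < totalSurplus q a p := by
  rw [totalSurplus_eq_sum_max]
  exact sum_lt_sum (fun _ _ => le_max_left _ _)
    ⟨j, mem_univ j, lt_max_of_lt_right (not_le.1 (mem_strong.not.1 hj))⟩

lemma surplus_div_totalSurplus_nonneg (hk : k ∈ strong q a p) :
    0 ≤ surplus q a p k / totalSurplus q a p :=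
  div_nonneg (mem_strong.1 hk) totalSurplus_nonneg

variable [DecidableEq α]

variable (q a p) in
/-- The probability that the strong product `k` is recommended when `j` is top: a strong product
recommends itself, a weak one recommends in proportion to surplus. Meaningful for `k` strong
only. -/
def poolingKernel (j k : α) : ℝ :=
  if j ∈ strong q a p then if j = k then 1 else 0
  else surplus q a p k / totalSurplus q a p

lemma poolingKernel_self (hk : k ∈ strong q a p) : poolingKernel q a p k k = 1 := by
  simp [poolingKernel, hk]

lemma poolingKernel_nonneg (hk : k ∈ strong q a p) : 0 ≤ poolingKernel q a p j k := by
  have := surplus_div_totalSurplus_nonneg hk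
  unfold poolingKernel
  split_ifs <;> linarith

lemma sum_poolingKernel (h : 0 ≤ ∑ k, surplus q a p k) (j : α) :
    ∑ k ∈ strong q a p, poolingKernel q a p j k = 1 := by
  by_cases hj : j ∈ strong q a p
  · simp [poolingKernel, hj]
  · have totalSurplus_pos : 0 < totalSurplus q a p := h.trans_lt (sum_surplus_lt_totalSurplus hj)
    simp only [poolingKernel, if_neg hj, ← sum_div]
    exact div_self totalSurplus_pos.ne'

lemma poolingKernel_le (hk : k ∈ strong q a p) :
    poolingKernel q a p j k ≤ (if j = k then 1 else 0) + surplus q a p k / totalSurplus q a p := by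
  have := surplus_div_totalSurplus_nonneg hk
  unfold poolingKernel
  split_ifs <;> linarith

lemma sum_mul_poolingKernel_le (hq : ∀ j, 0 ≤ q j) (hsum : ∑ j, q j ≤ 1)
    (hk : k ∈ strong q a p) :
    ∑ j, q j * poolingKernel q a p j k ≤ q k + surplus q a p k / totalSurplus q a p :=
  calc ∑ j, q j * poolingKernel q a p j k
      ≤ ∑ j, q j * ((if j = k then 1 else 0) + surplus q a p k / totalSurplus q a p) :=
        sum_le_sum fun j _ => mul_le_mul_of_nonneg_left (poolingKernel_le hk) (hq j)
    _ = q k + (∑ j, q j) * (surplus q a p k / totalSurplus q a p) := by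
        simp [mul_add, sum_add_distrib, sum_mul]
    _ ≤ q k + surplus q a p k / totalSurplus q a p := by
        gcongr
        exact mul_le_of_le_one_left (surplus_div_totalSurplus_nonneg hk) hsum

lemma price_mul_sum_mul_poolingKernel_le (hq : ∀ j, 0 ≤ q j) (hsum : ∑ j, q j ≤ 1) (hp : 0 ≤ p)
    (hle : p ≤ ∑ k, surplus q a p k) (hk : k ∈ strong q a p) :
    p * ∑ j, q j * poolingKernel q a p j k ≤ a k := by
  have price_share_le_one : p / totalSurplus q a p ≤ 1 :=
    div_le_one_of_le₀ (hle.trans sum_surplus_le_totalSurplus) totalSurplus_nonneg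
  calc p * ∑ j, q j * poolingKernel q a p j k
      ≤ p * (q k + surplus q a p k / totalSurplus q a p) :=
        mul_le_mul_of_nonneg_left (sum_mul_poolingKernel_le hq hsum hk) hp
    _ = p * q k + surplus q a p k * (p / totalSurplus q a p) := by ring
    _ ≤ p * q k + surplus q a p k := by
        gcongr
        exact mul_le_of_le_one_right (mem_strong.1 hk) price_share_le_one
    _ = a k := by simp [surplus]

variable (q a p)

/-- The signal that recommends the strong product `k`: it pools `k` with all weak products. -/
def poolingSignal (k : α) : Finset α := insert k (strong q a p)ᶜ

/-- The signal space of the pooling disclosure. -/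
def poolingSignals : Finset (Finset α) := (strong q a p).image (poolingSignal q a p)

/-- The pooling disclosure: when `j` is top, the signal is the recommendation drawn from
`poolingKernel q a p j`. -/
def poolingDisclosure (j : α) (s : Finset α) : ℝ :=
  ∑ k ∈ strong q a p with poolingSignal q a p k = s, poolingKernel q a p j k

variable {q a p}

lemma poolingSignal_injOn : Set.InjOn (poolingSignal q a p) (strong q a p) :=
  fun _ hk _ _ h => (insert_inj (by simpa using hk)).1 h

lemma poolingDisclosure_poolingSignal (hk : k ∈ strong q a p) :
    poolingDisclosure q a p j (poolingSignal q a p k) = poolingKernel q a p j k := by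
  have fiber_eq : {l ∈ strong q a p | poolingSignal q a p l = poolingSignal q a p k} = {k} := by
    ext l
    simp only [mem_filter, mem_singleton]
    exact ⟨fun hl => poolingSignal_injOn hl.1 hk hl.2, by rintro rfl; exact ⟨hk, rfl⟩⟩
  rw [poolingDisclosure, fiber_eq, sum_singleton]

lemma mem_of_poolingDisclosure_pos {s : Finset α} (h : 0 < poolingDisclosure q a p j s) :
    j ∈ s := by
  obtain ⟨k, hk, kernel_ne_zero⟩ := exists_ne_zero_of_sum_ne_zero h.ne'
  obtain ⟨-, rfl⟩ := mem_filter.1 hk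
  by_cases hj : j ∈ strong q a p
  · have hjk : j = k := by simpa [poolingKernel, hj] using kernel_ne_zero
    exact hjk ▸ mem_insert_self _ _
  · exact mem_insert_of_mem (mem_compl.2 hj)

lemma isCoarseDisclosure_poolingDisclosure (h : 0 ≤ ∑ k, surplus q a p k) :
    IsCoarseDisclosure (poolingSignals q a p) (poolingDisclosure q a p) where
  nonempty s hs := by
    obtain ⟨k, -, rfl⟩ := mem_image.1 hs
    exact insert_nonempty _ _
  distribution j := by
    refine ⟨fun s => sum_nonneg fun k hk => poolingKernel_nonneg (mem_filter.1 hk).1,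
      fun s hs => ?_, ?_⟩
    · rw [poolingDisclosure, filter_false_of_mem, sum_empty]
      exact fun k hk hks => hs (mem_image.2 ⟨k, hk, hks⟩)
    · exact (sum_fiberwise_of_maps_to (fun _ => mem_image_of_mem _) _).trans (sum_poolingKernel h j)
  mem _ _ := mem_of_poolingDisclosure_pos

end Pooling

section HorizontalDisclosure

variable {V : Finset (Fin m → ℝ)} {f : (Fin m → ℝ) → ℝ} {top : (Fin m → ℝ) → Fin m}

variable (V f top) in
/-- The welfare `E[vᵢ; i is top]` contributed by product `i`, i.e. `condMean V f top i i` weighted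
by `probTop V f top i`. -/
def topWelfare (i : Fin m) : ℝ := ∑ v ∈ V with top v = i, f v * v i

lemma probTop_nonneg (hf : ∀ v ∈ V, 0 ≤ f v) (i : Fin m) : 0 ≤ probTop V f top i :=
  sum_nonneg fun v hv => hf v (mem_filter.1 hv).1

lemma sum_probTop : ∑ i, probTop V f top i = ∑ v ∈ V, f v :=
  sum_fiberwise V top f

lemma sum_topWelfare : ∑ i, topWelfare V f top i = ∑ v ∈ V, f v * v (top v) := by
  rw [← sum_fiberwise V top]
  refine sum_congr rfl fun i _ => sum_congr rfl fun v hv => ?_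
  rw [(mem_filter.1 hv).2]

lemma sigR_comp_top (τ : Fin m → ι → ℝ) (s : ι) :
    sigR V f (fun v => τ (top v)) s = ∑ i, probTop V f top i * τ i s := by
  rw [sigR, ← sum_fiberwise V top]
  refine sum_congr rfl fun i _ => ?_
  rw [probTop, sum_mul]
  refine sum_congr rfl fun v hv => ?_
  rw [(mem_filter.1 hv).2]

lemma mul_topWelfare_le_sum {τ : Fin m → ι → ℝ} {s : ι} (hf : ∀ v ∈ V, 0 ≤ f v)
    (hnn : ∀ v ∈ V, ∀ i, 0 ≤ v i) (hτ : ∀ i, 0 ≤ τ i s) (k : Fin m) :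
    τ k s * topWelfare V f top k ≤ ∑ v ∈ V, f v * τ (top v) s * v k :=
  calc τ k s * topWelfare V f top k
      = ∑ v ∈ V with top v = k, f v * τ (top v) s * v k := by
        rw [topWelfare, mul_sum]
        refine sum_congr rfl fun v hv => ?_
        rw [(mem_filter.1 hv).2]
        ring
    _ ≤ ∑ v ∈ V, f v * τ (top v) s * v k :=
        sum_le_sum_of_subset_of_nonneg (filter_subset _ _) fun v hv _ =>
          mul_nonneg (mul_nonneg (hf v hv) (hτ _)) (hnn v hv k)

lemma le_post_comp_top {τ : Fin m → ι → ℝ} {s : ι} {p : ℝ} {k : Fin m} (hf : ∀ v ∈ V, 0 ≤ f v)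
    (hnn : ∀ v ∈ V, ∀ i, 0 ≤ v i) (hτ : ∀ i, 0 ≤ τ i s)
    (hpos : 0 < sigR V f (fun v => τ (top v)) s)
    (h : p * ∑ i, probTop V f top i * τ i s ≤ τ k s * topWelfare V f top k) :
    p ≤ post V f (fun v => τ (top v)) s k := by
  rw [post, le_div_iff₀ hpos, sigR_comp_top]
  exact h.trans (mul_topWelfare_le_sum hf hnn hτ k)

lemma exists_coarseDisclosure_le_post {p : ℝ} (hf : ∀ v ∈ V, 0 ≤ f v) (hsum : ∑ v ∈ V, f v ≤ 1)
    (hnn : ∀ v ∈ V, ∀ i, 0 ≤ v i) (hp : 0 ≤ p) (hle : 2 * p ≤ ∑ v ∈ V, f v * v (top v)) :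
    ∃ S τ, IsCoarseDisclosure S τ ∧ ∀ s ∈ S, 0 < sigR V f (fun v => τ (top v)) s →
      ∃ k, p ≤ post V f (fun v => τ (top v)) s k := by
  set q := probTop V f top
  set a := topWelfare V f top
  have sum_q_le : ∑ i, q i ≤ 1 := sum_probTop.trans_le hsum
  have price_le_sum_surplus : p ≤ ∑ i, surplus q a p i := by
    have sum_eq : ∑ i, surplus q a p i = ∑ v ∈ V, f v * v (top v) - p * ∑ i, q i := by
      simp only [surplus, sum_sub_distrib, mul_sum, a, sum_topWelfare]
    linarith [mul_le_of_le_one_right hp sum_q_le]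
  have coarse : IsCoarseDisclosure (poolingSignals q a p) (poolingDisclosure q a p) :=
    isCoarseDisclosure_poolingDisclosure (hp.trans price_le_sum_surplus)
  refine ⟨_, _, coarse, fun s hs hpos => ?_⟩
  obtain ⟨k, hk, rfl⟩ := mem_image.1 hs
  refine ⟨k, le_post_comp_top hf hnn (fun i => (coarse.distribution i).1 _) hpos ?_⟩
  simp only [poolingDisclosure_poolingSignal hk, poolingKernel_self hk, one_mul]
  exact price_mul_sum_mul_poolingKernel_le (probTop_nonneg hf) sum_q_le hp price_le_sum_surplus hk

end HorizontalDisclosure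

section Welfare

variable {V : Finset (Fin m → ℝ)} {f : (Fin m → ℝ) → ℝ} {v : Fin m → ℝ} (hm : 0 < m)

lemma le_vmax (i : Fin m) : v i ≤ vmax hm v :=
  le_sup' v (mem_univ i)

lemma vmax_nonneg (hv : ∀ i, 0 ≤ v i) : 0 ≤ vmax hm v :=
  (hv ⟨0, hm⟩).trans (le_vmax hm _)

lemma vmax_eq_of_forall_le {i : Fin m} (h : ∀ j, v j ≤ v i) : vmax hm v = v i :=
  (sup'_le _ _ fun j _ => h j).antisymm (le_vmax hm i)

lemma le_apply_istar (v : Fin m → ℝ) (j : Fin m) : v j ≤ v (istar hm v) := by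
  have istar_mem : istar hm v ∈ ({i | ∀ j, v j ≤ v i} : Finset (Fin m)) := min'_mem _ _
  exact (mem_filter.1 istar_mem).2 j

lemma sum_mul_le_vmax {y : Fin m → ℝ} (hv : ∀ i, 0 ≤ v i) (hy : ∀ i, 0 ≤ y i)
    (hsum : ∑ i, y i ≤ 1) : ∑ i, v i * y i ≤ vmax hm v :=
  calc ∑ i, v i * y i
      ≤ ∑ i, vmax hm v * y i :=
        sum_le_sum fun i _ => mul_le_mul_of_nonneg_right (le_vmax hm i) (hy i)
    _ = vmax hm v * ∑ i, y i := (mul_sum _ _ _).symm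
    _ ≤ vmax hm v := mul_le_of_le_one_right (vmax_nonneg hm hv) hsum

lemma sigR_mul_sum_post_mul {σ : (Fin m → ℝ) → ι → ℝ} {s : ι} (hs : sigR V f σ s ≠ 0)
    (y : Fin m → ℝ) :
    sigR V f σ s * ∑ i, post V f σ s i * y i = ∑ v ∈ V, f v * σ v s * ∑ i, v i * y i := by
  simp only [mul_sum, ← mul_assoc, post, mul_div_cancel₀ _ hs, sum_mul]
  exact sum_comm

lemma sigR_mul_price_le {S : Finset ι} {σ : (Fin m → ℝ) → ι → ℝ} {x : ι → Fin m → ℝ}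
    {q : ι → ℝ} {s : ι} (hf : ∀ v ∈ V, 0 ≤ f v) (hnn : ∀ v ∈ V, ∀ i, 0 ≤ v i)
    (hσ : IsInfo V S σ) (hx : IsAlloc S x) (hIR : IR V f S σ x q) (hs : s ∈ S) :
    sigR V f σ s * q s ≤ ∑ v ∈ V, f v * σ v s * vmax hm v := by
  have weight_nonneg : ∀ v ∈ V, 0 ≤ f v * σ v s := fun v hv =>
    mul_nonneg (hf v hv) ((hσ v hv).1 s)
  have sigR_nonneg : 0 ≤ sigR V f σ s := sum_nonneg weight_nonneg
  rcases sigR_nonneg.eq_or_lt with hzero | hpos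
  · rw [← hzero, zero_mul]
    exact sum_nonneg fun v hv => mul_nonneg (weight_nonneg v hv) (vmax_nonneg hm (hnn v hv))
  · calc sigR V f σ s * q s
        ≤ sigR V f σ s * ∑ i, post V f σ s i * x s i :=
          mul_le_mul_of_nonneg_left (sub_nonneg.1 (hIR s hs hpos)) hpos.le
      _ = ∑ v ∈ V, f v * σ v s * ∑ i, v i * x s i := sigR_mul_sum_post_mul hpos.ne' _
      _ ≤ ∑ v ∈ V, f v * σ v s * vmax hm v :=
          sum_le_sum fun v hv => mul_le_mul_of_nonneg_left
            (sum_mul_le_vmax hm (hnn v hv) (hx s hs).1 (hx s hs).2.2) (weight_nonneg v hv)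

lemma rev_le_sum_mul_vmax {S : Finset ι} {σ : (Fin m → ℝ) → ι → ℝ} {x : ι → Fin m → ℝ}
    {q : ι → ℝ} (hf : ∀ v ∈ V, 0 ≤ f v) (hnn : ∀ v ∈ V, ∀ i, 0 ≤ v i)
    (hσ : IsInfo V S σ) (hx : IsAlloc S x) (hIR : IR V f S σ x q) :
    Rev V f S σ q ≤ ∑ v ∈ V, f v * vmax hm v :=
  calc Rev V f S σ q
      ≤ ∑ s ∈ S, ∑ v ∈ V, f v * σ v s * vmax hm v :=
        sum_le_sum fun _ hs => sigR_mul_price_le hm hf hnn hσ hx hIR hs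
    _ = ∑ v ∈ V, f v * vmax hm v := by
        rw [sum_comm]
        refine sum_congr rfl fun v hv => ?_
        rw [← sum_mul, ← mul_sum, (hσ v hv).2.2, mul_one]

end Welfare

theorem uniform_pricing_half_of_optimal_general (hm : 0 < m)
    {V : Finset (Fin m → ℝ)} {f : (Fin m → ℝ) → ℝ} {top : (Fin m → ℝ) → Fin m}
    (hf : ∀ v ∈ V, 0 ≤ f v) (hsum : ∑ v ∈ V, f v = 1) (hnn : ∀ v ∈ V, ∀ i, 0 ≤ v i)
    (htop : ∀ v ∈ V, ∀ j, v j ≤ v (top v)) :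
    ∃ (S : Finset (Finset (Fin m))) (τ : Fin m → Finset (Fin m) → ℝ) (p : ℝ),
      IsCoarseDisclosure S τ ∧ 0 ≤ p ∧ (1 / 2) * (∑ v ∈ V, f v * vmax hm v) ≤ p ∧
      (∀ s ∈ S, 0 < sigR V f (fun v => τ (top v)) s →
        p ≤ univ.sup' (univNe hm) (post V f (fun v => τ (top v)) s)) ∧
      (∀ (κ : Type) (S' : Finset κ) (σ' : (Fin m → ℝ) → κ → ℝ)
          (x : κ → Fin m → ℝ) (q : κ → ℝ),
          IsInfo V S' σ' → IsAlloc S' x → IR V f S' σ' x q → Rev V f S' σ' q ≤ 2 * p) := by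
  set W := ∑ v ∈ V, f v * vmax hm v
  have W_nonneg : 0 ≤ W :=
    sum_nonneg fun v hv => mul_nonneg (hf v hv) (vmax_nonneg hm (hnn v hv))
  have W_eq : W = ∑ v ∈ V, f v * v (top v) :=
    sum_congr rfl fun v hv => by rw [vmax_eq_of_forall_le hm (htop v hv)]
  obtain ⟨S, τ, coarse, sells⟩ := exists_coarseDisclosure_le_post (top := top) (p := 1 / 2 * W)
    hf hsum.le hnn (by positivity) (by linarith)
  refine ⟨S, τ, 1 / 2 * W, coarse, by positivity, le_rfl, fun s hs hpos => ?_,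
    fun κ S' σ' x q hσ hx hIR => ?_⟩
  · obtain ⟨k, hk⟩ := sells s hs hpos
    exact hk.trans (le_sup' _ (mem_univ k))
  · linarith [rev_le_sum_mul_vmax hm hf hnn hσ hx hIR]

/-- uniform pricing with a coarse horizontal disclosure guarantees half of
the optimal welfare, hence half of the revenue of any IC-IR mechanism. -/
theorem uniform_pricing_half_of_optimal (m : ℕ) (hm : 0 < m)
    (V : Finset (Fin m → ℝ)) (f : (Fin m → ℝ) → ℝ)
    (hV : V.Nonempty)
    (hfpos : ∀ v ∈ V, 0 < f v)
    (hfzero : ∀ v, v ∉ V → f v = 0)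
    (hsum : ∑ v ∈ V, f v = 1)
    (hnn : ∀ v ∈ V, ∀ i, 0 ≤ v i) :
    ∃ (S : Finset (Finset (Fin m))) (τ : Fin m → Finset (Fin m) → ℝ) (p : ℝ),
      -- the signals are nonempty subsets of the set of products
      (∀ s ∈ S, s.Nonempty) ∧
      -- each τ i is a probability distribution over S
      (∀ i : Fin m, (∀ s, 0 ≤ τ i s) ∧ (∀ s, s ∉ S → τ i s = 0) ∧ (∑ s ∈ S, τ i s = 1)) ∧
      -- i belongs to every signal in the support of τ i
      (∀ i : Fin m, ∀ s, 0 < τ i s → i ∈ s) ∧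
      -- the price is nonnegative and at least half of the optimal welfare E[max_i v_i]
      0 ≤ p ∧
      (1 / 2) * (∑ v ∈ V, f v * vmax hm v) ≤ p ∧
      -- under the coarse horizontal disclosure σ(v) = τ(i*(v)), every signal of positive
      -- probability leads to a purchase at the uniform price p:  max_i ν_i(s) ≥ p
      (∀ s ∈ S, 0 < sigR V f (fun v => τ (istar hm v)) s →
        p ≤ univ.sup' (univNe hm) (post V f (fun v => τ (istar hm v)) s)) ∧
      -- hence the revenue p is at least half of the revenue of any IC-IR mechanism
      (∀ (κ : Type) (S' : Finset κ) (σ' : (Fin m → ℝ) → κ → ℝ)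
          (x : κ → Fin m → ℝ) (q : κ → ℝ),
          IsInfo V S' σ' → IsAlloc S' x → IC V f S' σ' x q → IR V f S' σ' x q →
          Rev V f S' σ' q ≤ 2 * p) := by
  obtain ⟨S, τ, p, coarse, price_nonneg, half_le, sells, rev_le⟩ :=
    uniform_pricing_half_of_optimal_general hm (fun v hv => (hfpos v hv).le) hsum hnn
      fun v _ => le_apply_istar hm v
  exact ⟨S, τ, p, coarse.nonempty, coarse.distribution, coarse.mem, price_nonneg, half_le, sells,
    fun κ S' σ' x q hσ hx _ => rev_le κ S' σ' x q hσ hx⟩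

end Screening
end
end

section
/- Fix ε ∈ (0,1), m = 2 products, and the value distribution with f(0,1) = 1−ε and f(1/ε, 1) = ε. (a) For every information structure σ with finite signal space S and every uniform price p ≥ 0, the revenue of the induced uniform pricing mechanism — in which at each signal s with r(s) > 0 the buyer purchases a product maximizing ν_i(s) and pays p if max_i ν_i(s) ≥ p, and purchases nothing otherwise — satisfies Σ_{s : max_i ν_i(s) ≥ p} r(s)·p ≤ 1. (b) There is an IC-IR mechanism with finite signal space whose revenue equals 2 − ε (full disclosure S = V, σ(v) = δ_v, with the buyer of type (1/ε,1) buying product 1 at price 1/ε and the buyer of type (0,1) buying product 2 at price 1). Hence uniform pricing mechanisms cannot guarantee more than a 1/(2−ε) fraction of the optimal revenue on this instance. -/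
open Finset

noncomputable section

namespace Screening

variable {m : ℕ} {ι : Type}

/-- The low type `(0, 1)`. -/
def vLow : Fin 2 → ℝ := ![0, 1]

/-- The high type `(1/ε, 1)`. -/
def vHigh (ε : ℝ) : Fin 2 → ℝ := ![ε⁻¹, 1]

/-- The tight-example distribution: `f(0,1) = 1 − ε`, `f(1/ε,1) = ε`. -/
def fTight (ε : ℝ) : (Fin 2 → ℝ) → ℝ :=
  fun v => if v = vLow then 1 - ε else if v = vHigh ε then ε else 0

/-- Full-disclosure information structure: the signal is the value profile itself. -/
def fullDisc : (Fin 2 → ℝ) → (Fin 2 → ℝ) → ℝ := fun v s => if s = v then 1 else 0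

/-!
Part (a) holds because only product 1 (index `0`) ever has a value above 1. At a price `p ≤ 1` a
uniform pricing mechanism earns at most 1. At a price `p > 1` it only sells at signals where the
posterior mean of product 1 is at least `p`, so by Markov's inequality and the law of iterated
expectations it earns at most the prior mean of product 1, namely `ε · ε⁻¹ = 1`.

For part (b), full disclosure makes the posterior mean equal to the type, and the two purchases
extract the whole surplus `ε · ε⁻¹ + (1 - ε) · 1`.
-/

section InformationStructure

variable {V : Finset (Fin m → ℝ)} {f : (Fin m → ℝ) → ℝ} {S : Finset ι}
  {σ : (Fin m → ℝ) → ι → ℝ}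

lemma sigR_nonneg (hf : ∀ v ∈ V, 0 ≤ f v) (hσ : IsInfo V S σ) (s : ι) : 0 ≤ sigR V f σ s :=
  sum_nonneg fun v hv => mul_nonneg (hf v hv) ((hσ v hv).1 s)

lemma sum_mul_info_mul (hσ : IsInfo V S σ) (g : (Fin m → ℝ) → ℝ) :
    ∑ s ∈ S, ∑ v ∈ V, f v * σ v s * g v = ∑ v ∈ V, f v * g v := by
  rw [sum_comm]
  refine sum_congr rfl fun v hv => ?_
  rw [← sum_mul, ← mul_sum, (hσ v hv).2.2, mul_one]

lemma sum_sigR (hσ : IsInfo V S σ) : ∑ s ∈ S, sigR V f σ s = ∑ v ∈ V, f v := by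
  simpa only [sigR, mul_one] using sum_mul_info_mul (f := f) hσ fun _ => 1

lemma sigR_mul_post (hf : ∀ v ∈ V, 0 ≤ f v) (hσ : IsInfo V S σ) (s : ι) (i : Fin m) :
    sigR V f σ s * post V f σ s i = ∑ v ∈ V, f v * σ v s * v i := by
  refine mul_div_cancel_of_imp' fun hr => ?_
  have hzero : ∀ v ∈ V, f v * σ v s = 0 :=
    (sum_eq_zero_iff_of_nonneg fun v hv => mul_nonneg (hf v hv) ((hσ v hv).1 s)).mp hr
  exact sum_eq_zero fun v hv => by rw [hzero v hv, zero_mul]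

lemma sum_sigR_mul_post (hf : ∀ v ∈ V, 0 ≤ f v) (hσ : IsInfo V S σ) (i : Fin m) :
    ∑ s ∈ S, sigR V f σ s * post V f σ s i = ∑ v ∈ V, f v * v i := by
  simp only [sigR_mul_post hf hσ, sum_mul_info_mul hσ fun v => v i]

lemma post_nonneg (hf : ∀ v ∈ V, 0 ≤ f v) (hσ : IsInfo V S σ) {i : Fin m}
    (hi : ∀ v ∈ V, 0 ≤ v i) (s : ι) : 0 ≤ post V f σ s i :=
  div_nonneg
    (sum_nonneg fun v hv => mul_nonneg (mul_nonneg (hf v hv) ((hσ v hv).1 s)) (hi v hv))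
    (sigR_nonneg hf hσ s)

-- At a signal of probability zero, `post` is `0` by division by zero.
lemma post_le (hf : ∀ v ∈ V, 0 ≤ f v) (hσ : IsInfo V S σ) {i : Fin m} {c : ℝ} (hc : 0 ≤ c)
    (hi : ∀ v ∈ V, v i ≤ c) (s : ι) : post V f σ s i ≤ c := by
  refine div_le_of_le_mul₀ (sigR_nonneg hf hσ s) hc ?_
  rw [sigR, mul_comm, sum_mul]
  exact sum_le_sum fun v hv =>
    mul_le_mul_of_nonneg_left (hi v hv) (mul_nonneg (hf v hv) ((hσ v hv).1 s))

lemma sum_sigR_mul_le_mean_of_le_post (hf : ∀ v ∈ V, 0 ≤ f v) (hσ : IsInfo V S σ) {i : Fin m}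
    (hi : ∀ v ∈ V, 0 ≤ v i) {T : Finset ι} (hTS : T ⊆ S) {p : ℝ}
    (hT : ∀ s ∈ T, p ≤ post V f σ s i) :
    ∑ s ∈ T, sigR V f σ s * p ≤ ∑ v ∈ V, f v * v i :=
  calc ∑ s ∈ T, sigR V f σ s * p
      ≤ ∑ s ∈ T, sigR V f σ s * post V f σ s i :=
        sum_le_sum fun s hs => mul_le_mul_of_nonneg_left (hT s hs) (sigR_nonneg hf hσ s)
    _ ≤ ∑ s ∈ S, sigR V f σ s * post V f σ s i :=
        sum_le_sum_of_subset_of_nonneg hTS fun s _ _ =>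
          mul_nonneg (sigR_nonneg hf hσ s) (post_nonneg hf hσ hi s)
    _ = ∑ v ∈ V, f v * v i := sum_sigR_mul_post hf hσ i

lemma sum_sigR_mul_le_of_le (hf : ∀ v ∈ V, 0 ≤ f v) (hf1 : ∑ v ∈ V, f v = 1)
    (hσ : IsInfo V S σ) {T : Finset ι} (hTS : T ⊆ S) {p c : ℝ} (hc : 0 ≤ c) (hpc : p ≤ c) :
    ∑ s ∈ T, sigR V f σ s * p ≤ c :=
  calc ∑ s ∈ T, sigR V f σ s * p
      ≤ ∑ s ∈ T, sigR V f σ s * c :=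
        sum_le_sum fun s _ => mul_le_mul_of_nonneg_left hpc (sigR_nonneg hf hσ s)
    _ ≤ ∑ s ∈ S, sigR V f σ s * c :=
        sum_le_sum_of_subset_of_nonneg hTS fun s _ _ => mul_nonneg (sigR_nonneg hf hσ s) hc
    _ = c := by rw [← sum_mul, sum_sigR hσ, hf1, one_mul]

end InformationStructure

section UniformPricing

/-- The revenue of the mechanism that posts the same price `p` for every product: a sale happens at
exactly those signals whose largest posterior mean is at least `p`. -/
def uniformPricingRevenue (hm : 0 < m) (V : Finset (Fin m → ℝ)) (f : (Fin m → ℝ) → ℝ)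
    (S : Finset ι) (σ : (Fin m → ℝ) → ι → ℝ) (p : ℝ) : ℝ :=
  ∑ s ∈ S.filter (fun s => p ≤ vmax hm (post V f σ s)), sigR V f σ s * p

theorem uniformPricingRevenue_le_max (hm : 0 < m) {V : Finset (Fin m → ℝ)}
    {f : (Fin m → ℝ) → ℝ} (hf : ∀ v ∈ V, 0 ≤ f v) (hf1 : ∑ v ∈ V, f v = 1) {S : Finset ι}
    {σ : (Fin m → ℝ) → ι → ℝ} (hσ : IsInfo V S σ) {i : Fin m} (hi : ∀ v ∈ V, 0 ≤ v i) {c : ℝ}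
    (hc : 0 ≤ c) (hother : ∀ j, j ≠ i → ∀ v ∈ V, v j ≤ c) (p : ℝ) :
    uniformPricingRevenue hm V f S σ p ≤ max c (∑ v ∈ V, f v * v i) := by
  rcases le_or_gt p c with hpc | hcp
  · exact le_max_of_le_left (sum_sigR_mul_le_of_le hf hf1 hσ (filter_subset _ _) hc hpc)
  · refine le_max_of_le_right
      (sum_sigR_mul_le_mean_of_le_post hf hσ hi (filter_subset _ _) fun s hs => ?_)
    obtain ⟨j, -, hj⟩ := (le_sup'_iff _).mp (mem_filter.mp hs).2
    have hji : j = i := by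
      by_contra hne
      exact (post_le hf hσ hc (hother j hne) s).not_gt (hcp.trans_le hj)
    exact hji ▸ hj

end UniformPricing

section FullDisclosure

variable {V : Finset (Fin 2 → ℝ)} {f : (Fin 2 → ℝ) → ℝ} {s : Fin 2 → ℝ}
  {x : (Fin 2 → ℝ) → Fin 2 → ℝ} {p : (Fin 2 → ℝ) → ℝ}

lemma isInfo_fullDisc (V : Finset (Fin 2 → ℝ)) : IsInfo V V fullDisc := by
  refine fun v hv => ⟨fun s => ?_, fun s hs => if_neg ?_, ?_⟩
  · unfold fullDisc
    split_ifs <;> norm_num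
  · rintro rfl
    exact hs hv
  · simp only [fullDisc, sum_ite_eq', hv, if_true]

lemma sigR_fullDisc (hs : s ∈ V) : sigR V f fullDisc s = f s := by
  simp only [sigR, fullDisc, mul_ite, mul_one, mul_zero, sum_ite_eq, hs, if_true]

lemma post_fullDisc (hs : s ∈ V) (hfs : f s ≠ 0) : post V f fullDisc s = s := by
  funext i
  rw [post, sigR_fullDisc hs, div_eq_iff hfs]
  simp only [fullDisc, mul_ite, ite_mul, mul_one, mul_zero, zero_mul, sum_ite_eq, hs, if_true]
  exact mul_comm _ _

lemma ic_fullDisc_iff :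
    IC V f V fullDisc x p ↔ ∀ s ∈ V, 0 < f s → ∀ s' ∈ V,
      (∑ i, s i * x s' i) - p s' ≤ (∑ i, s i * x s i) - p s := by
  refine forall₂_congr fun s hs => ?_
  rw [sigR_fullDisc hs]
  exact forall_congr' fun hfs => by rw [post_fullDisc hs hfs.ne']

lemma ir_fullDisc_iff :
    IR V f V fullDisc x p ↔ ∀ s ∈ V, 0 < f s → 0 ≤ (∑ i, s i * x s i) - p s := by
  refine forall₂_congr fun s hs => ?_
  rw [sigR_fullDisc hs]
  exact forall_congr' fun hfs => by rw [post_fullDisc hs hfs.ne']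

lemma rev_fullDisc : Rev V f V fullDisc p = ∑ v ∈ V, f v * p v :=
  sum_congr rfl fun _ hv => by rw [sigR_fullDisc hv]

end FullDisclosure

section TightExample

variable {ε : ℝ}

lemma vLow_ne_vHigh (hε : ε ≠ 0) : vLow ≠ vHigh ε := fun h =>
  inv_ne_zero hε (congrFun h 0).symm

lemma fTight_vLow (ε : ℝ) : fTight ε vLow = 1 - ε := if_pos rfl

lemma fTight_vHigh (hε : ε ≠ 0) : fTight ε (vHigh ε) = ε := by
  rw [fTight, if_neg (vLow_ne_vHigh hε).symm, if_pos rfl]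

lemma sum_fTight_mul (hε : ε ≠ 0) (g : (Fin 2 → ℝ) → ℝ) :
    ∑ v ∈ {vLow, vHigh ε}, fTight ε v * g v = (1 - ε) * g vLow + ε * g (vHigh ε) := by
  rw [sum_pair (vLow_ne_vHigh hε), fTight_vLow, fTight_vHigh hε]

lemma sum_fTight (hε : ε ≠ 0) : ∑ v ∈ {vLow, vHigh ε}, fTight ε v = 1 := by
  simpa using sum_fTight_mul hε fun _ => 1

lemma fTight_nonneg (hε0 : 0 ≤ ε) (hε1 : ε ≤ 1) (v : Fin 2 → ℝ) : 0 ≤ fTight ε v := by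
  unfold fTight
  split_ifs
  exacts [sub_nonneg.mpr hε1, hε0, le_rfl]

lemma sum_fTight_mul_apply_zero (hε : ε ≠ 0) :
    ∑ v ∈ {vLow, vHigh ε}, fTight ε v * v 0 = 1 := by
  rw [sum_fTight_mul hε fun v => v 0]
  simp [vLow, vHigh, hε]

theorem uniformPricingRevenue_tight_le_one (hε0 : 0 < ε) (hε1 : ε ≤ 1) {S : Finset ι}
    {σ : (Fin 2 → ℝ) → ι → ℝ} (hσ : IsInfo {vLow, vHigh ε} S σ) (p : ℝ) :
    uniformPricingRevenue two_pos {vLow, vHigh ε} (fTight ε) S σ p ≤ 1 := by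
  have hvalue0 : ∀ v ∈ ({vLow, vHigh ε} : Finset _), 0 ≤ v 0 := by
    simp [vLow, vHigh, hε0.le]
  have hvalue1 : ∀ j : Fin 2, j ≠ 0 → ∀ v ∈ ({vLow, vHigh ε} : Finset _), v j ≤ 1 := by
    simp [Fin.forall_fin_two, vLow, vHigh]
  have hbound := uniformPricingRevenue_le_max two_pos (fun v _ => fTight_nonneg hε0.le hε1 v)
    (sum_fTight hε0.ne') hσ hvalue0 zero_le_one hvalue1 p
  rwa [sum_fTight_mul_apply_zero hε0.ne', max_self] at hbound

/-- The allocation rule under full disclosure that gives product 1 (index `0`) to the high type and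
product 2 (index `1`) to the low type. -/
def tightAlloc (ε : ℝ) (s : Fin 2 → ℝ) : Fin 2 → ℝ :=
  if s = vHigh ε then ![1, 0] else ![0, 1]

/-- The payment rule that charges each type of the tight example its value for the product assigned
by `tightAlloc`. -/
def tightPrice (ε : ℝ) (s : Fin 2 → ℝ) : ℝ :=
  if s = vHigh ε then ε⁻¹ else 1

lemma sum_mul_tightAlloc_vHigh (ε : ℝ) (v : Fin 2 → ℝ) :
    ∑ i, v i * tightAlloc ε (vHigh ε) i = v 0 := by
  simp [tightAlloc]

lemma sum_mul_tightAlloc_vLow (hε : ε ≠ 0) (v : Fin 2 → ℝ) :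
    ∑ i, v i * tightAlloc ε vLow i = v 1 := by
  simp [tightAlloc, vLow_ne_vHigh hε]

lemma tightPrice_vHigh (ε : ℝ) : tightPrice ε (vHigh ε) = ε⁻¹ := if_pos rfl

lemma tightPrice_vLow (hε : ε ≠ 0) : tightPrice ε vLow = 1 := if_neg (vLow_ne_vHigh hε)

lemma isAlloc_tightAlloc (ε : ℝ) (S : Finset (Fin 2 → ℝ)) : IsAlloc S (tightAlloc ε) := by
  intro s _
  unfold tightAlloc
  split_ifs <;> simp [Fin.forall_fin_two]

lemma ic_tight (hε : 0 < ε) :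
    IC {vLow, vHigh ε} (fTight ε) {vLow, vHigh ε} fullDisc (tightAlloc ε) (tightPrice ε) := by
  refine ic_fullDisc_iff.mpr fun s hs _ s' hs' => ?_
  rw [mem_insert, mem_singleton] at hs hs'
  have hlow : vLow 0 - ε⁻¹ ≤ vLow 1 - 1 := by simp [vLow, hε.le]
  have hhigh : vHigh ε 1 - 1 ≤ vHigh ε 0 - ε⁻¹ := by simp [vHigh]
  rcases hs with rfl | rfl <;> rcases hs' with rfl | rfl
  · exact le_rfl
  · simpa only [sum_mul_tightAlloc_vLow hε.ne', sum_mul_tightAlloc_vHigh, tightPrice_vLow hε.ne',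
      tightPrice_vHigh] using hlow
  · simpa only [sum_mul_tightAlloc_vLow hε.ne', sum_mul_tightAlloc_vHigh, tightPrice_vLow hε.ne',
      tightPrice_vHigh] using hhigh
  · exact le_rfl

lemma ir_tight (hε : ε ≠ 0) :
    IR {vLow, vHigh ε} (fTight ε) {vLow, vHigh ε} fullDisc (tightAlloc ε) (tightPrice ε) := by
  refine ir_fullDisc_iff.mpr fun s hs _ => ?_
  rw [mem_insert, mem_singleton] at hs
  rcases hs with rfl | rfl
  · rw [sum_mul_tightAlloc_vLow hε, tightPrice_vLow hε]
    simp [vLow]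
  · rw [sum_mul_tightAlloc_vHigh, tightPrice_vHigh]
    simp [vHigh]

lemma rev_tight (hε : ε ≠ 0) :
    Rev {vLow, vHigh ε} (fTight ε) {vLow, vHigh ε} fullDisc (tightPrice ε) = 2 - ε := by
  rw [rev_fullDisc, sum_fTight_mul hε, tightPrice_vLow hε, tightPrice_vHigh,
    mul_inv_cancel₀ hε]
  ring

end TightExample

/-- tightness of the factor 2 for uniform pricing. -/
theorem uniform_pricing_tight_example (ε : ℝ) (hε0 : 0 < ε) (hε1 : ε < 1) :
    -- (a) every uniform pricing mechanism, under any information structure, has revenue ≤ 1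
    (∀ (ι : Type) (S : Finset ι) (σ : (Fin 2 → ℝ) → ι → ℝ) (p : ℝ),
      IsInfo {vLow, vHigh ε} S σ → 0 ≤ p →
      ∑ s ∈ S.filter (fun s =>
          p ≤ univ.sup' (univNe (by norm_num)) (post {vLow, vHigh ε} (fTight ε) σ s)),
        sigR {vLow, vHigh ε} (fTight ε) σ s * p ≤ 1) ∧
    -- (b) the full-disclosure pricing mechanism selling product 1 at price 1/ε to the
    -- high type and product 2 at price 1 to the low type is IC-IR with revenue 2 − ε
    (IsInfo {vLow, vHigh ε} {vLow, vHigh ε} fullDisc ∧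
      IsAlloc {vLow, vHigh ε} (fun s => if s = vHigh ε then ![1, 0] else ![0, 1]) ∧
      IC {vLow, vHigh ε} (fTight ε) {vLow, vHigh ε} fullDisc
        (fun s => if s = vHigh ε then ![1, 0] else ![0, 1])
        (fun s => if s = vHigh ε then ε⁻¹ else 1) ∧
      IR {vLow, vHigh ε} (fTight ε) {vLow, vHigh ε} fullDisc
        (fun s => if s = vHigh ε then ![1, 0] else ![0, 1])
        (fun s => if s = vHigh ε then ε⁻¹ else 1) ∧
      Rev {vLow, vHigh ε} (fTight ε) {vLow, vHigh ε} fullDisc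
        (fun s => if s = vHigh ε then ε⁻¹ else 1) = 2 - ε) := by
  exact ⟨fun _ _ _ p hσ _ => uniformPricingRevenue_tight_le_one hε0 hε1.le hσ p,
    isInfo_fullDisc _, isAlloc_tightAlloc ε _, ic_tight hε0, ir_tight hε0.ne', rev_tight hε0.ne'⟩

end Screening
end
end

section
/- Let (v1, v2) be a random vector with finite support in ℝ_{≥0}², let A = {v1 ≥ v2}, q1 = P(A), q2 = 1 − q1, and suppose q1 > 0 and q2 > 0. Set a = E[v1 | A], b = E[v1 | not A], c = E[v2 | not A], and suppose (without loss of generality) that c ≥ a. Then max{ E[v1], E[v2], q1·a + q2·(c − max(0, b − a)) } ≥ (2/3)·E[max(v1, v2)], where E[max(v1, v2)] = q1·a + q2·c. The three quantities in the maximum are the revenues of three pricing mechanisms: (M1) revealing no information and selling only product 1 at price E[v1]; (M2) revealing no information and selling only product 2 at price E[v2]; (M3) horizontal disclosure (revealing the event A or its complement) with prices p1 = a on product 1 and p2 = c − max(0, b − a) on product 2, under which the buyer purchases product 1 at signal A and product 2 at the complementary signal. Hence with two products some pricing mechanism with (coarse) horizontal disclosure attains at least 2/3 of the optimal welfare. 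-/
open Finset

noncomputable section

namespace Screening

/-! Write `W = q₁ a + q₂ c` for the optimal welfare. The first mechanism earns `q₁ a + q₂ b`, the
second at least `q₂ c`, and the third `W - q₂ max(0, b - a) ≥ W - q₂ b` because `a, b ≥ 0`. These
three revenues add up to at least `2 W`, so the largest of them is at least `2 W / 3`. -/

variable {ι K : Type*} [Field K]

theorem centerMass_eq_sum_mul_div_sum (s : Finset ι) (w x : ι → K) :
    s.centerMass w x = (∑ i ∈ s, w i * x i) / ∑ i ∈ s, w i := by
  simp only [centerMass, smul_eq_mul, div_eq_inv_mul]

theorem sum_mul_centerMass {s : Finset ι} {w : ι → K} (hw : ∑ i ∈ s, w i ≠ 0) (x : ι → K) :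
    (∑ i ∈ s, w i) * s.centerMass w x = ∑ i ∈ s, w i * x i := by
  rw [centerMass_eq_sum_mul_div_sum, mul_div_cancel₀ _ hw]

theorem sum_mul_max {R : Type*} [NonUnitalNonAssocSemiring R] [LinearOrder R] (s : Finset ι)
    (w x y : ι → R) :
    ∑ i ∈ s, w i * max (x i) (y i) =
      ∑ i ∈ s with y i ≤ x i, w i * x i + ∑ i ∈ s with ¬ y i ≤ x i, w i * y i := by
  simp only [max_def', mul_ite, sum_ite]

theorem le_max_max_of_three_mul_le_add {R : Type*} [CommRing R] [LinearOrder R]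
    [IsStrictOrderedRing R] {t x y z : R} (h : 3 * t ≤ x + y + z) : t ≤ max x (max y z) := by
  by_contra! hlt
  obtain ⟨hx, hyz⟩ := max_lt_iff.mp hlt
  obtain ⟨hy, hz⟩ := max_lt_iff.mp hyz
  linarith

variable [LinearOrder K] [IsStrictOrderedRing K]

theorem two_thirds_mul_welfare_le_max_revenue {q₁ q₂ a b c r : K} (hq₂ : 0 ≤ q₂) (ha : 0 ≤ a)
    (hb : 0 ≤ b) (hr : q₂ * c ≤ r) :
    2 / 3 * (q₁ * a + q₂ * c) ≤
      max (q₁ * a + q₂ * b) (max r (q₁ * a + q₂ * (c - max 0 (b - a)))) := by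
  have rent_le : max 0 (b - a) ≤ b := max_le hb (sub_le_self b ha)
  have disclosure_ge : q₁ * a + q₂ * (c - b) ≤ q₁ * a + q₂ * (c - max 0 (b - a)) := by gcongr
  exact le_max_max_of_three_mul_le_add (by linarith)

theorem two_product_two_thirds_general (s : Finset ι) (w x y : ι → K)
    (hw : ∀ i ∈ s, 0 ≤ w i) (hx : ∀ i ∈ s, 0 ≤ x i) (hy : ∀ i ∈ s, 0 ≤ y i)
    {q₁ q₂ a b c : K}
    (hq₁ : q₁ = ∑ i ∈ s with y i ≤ x i, w i) (hq₂ : q₂ = ∑ i ∈ s with ¬ y i ≤ x i, w i)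
    (hq₁_pos : 0 < q₁) (hq₂_pos : 0 < q₂)
    (ha : a = {i ∈ s | y i ≤ x i}.centerMass w x)
    (hb : b = {i ∈ s | ¬ y i ≤ x i}.centerMass w x)
    (hc : c = {i ∈ s | ¬ y i ≤ x i}.centerMass w y) :
    ∑ i ∈ s, w i * max (x i) (y i) = q₁ * a + q₂ * c ∧
    2 / 3 * ∑ i ∈ s, w i * max (x i) (y i) ≤
      max (∑ i ∈ s, w i * x i)
        (max (∑ i ∈ s, w i * y i) (q₁ * a + q₂ * (c - max 0 (b - a)))) := by
  have hq₁a : q₁ * a = ∑ i ∈ s with y i ≤ x i, w i * x i := by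
    rw [ha, hq₁, sum_mul_centerMass (hq₁ ▸ hq₁_pos.ne')]
  have hq₂b : q₂ * b = ∑ i ∈ s with ¬ y i ≤ x i, w i * x i := by
    rw [hb, hq₂, sum_mul_centerMass (hq₂ ▸ hq₂_pos.ne')]
  have hq₂c : q₂ * c = ∑ i ∈ s with ¬ y i ≤ x i, w i * y i := by
    rw [hc, hq₂, sum_mul_centerMass (hq₂ ▸ hq₂_pos.ne')]
  have ha_nonneg : 0 ≤ a := ha ▸ (convex_Ici 0).centerMass_mem
    (fun i hi => hw i (mem_of_mem_filter i hi)) (hq₁ ▸ hq₁_pos)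
    (fun i hi => hx i (mem_of_mem_filter i hi))
  have hb_nonneg : 0 ≤ b := hb ▸ (convex_Ici 0).centerMass_mem
    (fun i hi => hw i (mem_of_mem_filter i hi)) (hq₂ ▸ hq₂_pos)
    (fun i hi => hx i (mem_of_mem_filter i hi))
  have welfare : ∑ i ∈ s, w i * max (x i) (y i) = q₁ * a + q₂ * c := by
    rw [sum_mul_max, hq₁a, hq₂c]
  have revenue_one : ∑ i ∈ s, w i * x i = q₁ * a + q₂ * b := by
    rw [hq₁a, hq₂b, sum_filter_add_sum_filter_not]
  have revenue_two : q₂ * c ≤ ∑ i ∈ s, w i * y i :=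
    hq₂c ▸ sum_le_sum_of_subset_of_nonneg (filter_subset _ s) fun i hi _ =>
      mul_nonneg (hw i hi) (hy i hi)
  refine ⟨welfare, ?_⟩
  rw [welfare, revenue_one]
  exact two_thirds_mul_welfare_le_max_revenue hq₂_pos.le ha_nonneg hb_nonneg revenue_two

/-- with two products, the best of the three pricing mechanisms
(M1: no information, sell product 1 at its prior mean; M2: no information, sell
product 2 at its prior mean; M3: horizontal disclosure with prices `a` and
`c − max 0 (b − a)`) obtains at least 2/3 of the optimal welfare
`E[max(v1,v2)] = q1·a + q2·c`. -/
theorem two_product_two_thirds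
    (V : Finset (ℝ × ℝ)) (f : ℝ × ℝ → ℝ)
    (hV : V.Nonempty)
    (hfpos : ∀ v ∈ V, 0 < f v)
    (hnn : ∀ v ∈ V, 0 ≤ v.1 ∧ 0 ≤ v.2)
    (hsum : ∑ v ∈ V, f v = 1)
    (q1 q2 a b c : ℝ)
    -- q1 = P(v1 ≥ v2), q2 = 1 − q1, both positive
    (hq1 : q1 = ∑ v ∈ V.filter (fun v => v.2 ≤ v.1), f v)
    (hq2 : q2 = 1 - q1)
    (hq1pos : 0 < q1) (hq2pos : 0 < q2)
    -- a = E[v1 | v1 ≥ v2], b = E[v1 | v1 < v2], c = E[v2 | v1 < v2]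
    (ha : a = (∑ v ∈ V.filter (fun v => v.2 ≤ v.1), f v * v.1) / q1)
    (hb : b = (∑ v ∈ V.filter (fun v => ¬ v.2 ≤ v.1), f v * v.1) / q2)
    (hc : c = (∑ v ∈ V.filter (fun v => ¬ v.2 ≤ v.1), f v * v.2) / q2)
    -- without loss of generality, c ≥ a
    (hca : a ≤ c) :
    (∑ v ∈ V, f v * max v.1 v.2 = q1 * a + q2 * c) ∧
    (2 / 3) * (∑ v ∈ V, f v * max v.1 v.2) ≤
      max (∑ v ∈ V, f v * v.1)
        (max (∑ v ∈ V, f v * v.2) (q1 * a + q2 * (c - max 0 (b - a)))) := by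
  have hq2_sum : q2 = ∑ v ∈ V with ¬ v.2 ≤ v.1, f v := by
    rw [hq2, hq1, ← hsum, ← sum_filter_add_sum_filter_not V (fun v => v.2 ≤ v.1) f,
      add_sub_cancel_left]
  simp only [hq1, hq2_sum, ← centerMass_eq_sum_mul_div_sum] at ha hb hc
  exact two_product_two_thirds_general V f Prod.fst Prod.snd (fun v hv => (hfpos v hv).le)
    (fun v hv => (hnn v hv).1) (fun v hv => (hnn v hv).2) hq1 hq2_sum hq1pos hq2pos ha hb hc

end Screening
end
end

section
/- Let f be a probability mass function with finite support V ⊆ ℝ², extended by 0 outside V, satisfying the log-submodularity condition: for all (v1, v2), (v1', v2') ∈ ℝ², f(min(v1,v1'), max(v2,v2'))·f(max(v1,v1'), min(v2,v2')) ≥ f(v1,v2)·f(v1',v2'). Then: (i) if P(v1 ≥ v2) > 0, then E[v1 | v1 ≥ v2] ≥ E[v1]; and (ii) if in addition P(v1 < v2) > 0, then E[v1 | v1 ≥ v2] ≥ E[v1 | v1 < v2]. -/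
open Finset

noncomputable section

namespace Screening

/-!
Reversing the order of the second coordinate turns log-submodularity into log-supermodularity on
the distributive lattice `ℝ × ℝᵒᵈ`, in which both the function `v ↦ v.1` and the event
`v.2 ≤ v.1` are increasing. The Fortuin–Kasteleyn–Ginibre inequality says that such a function and
the indicator of such an event are positively correlated, which is (i) after division by the
probability of the event. Splitting the expectation over the event and its complement gives (ii).
-/

section FKG

variable {α R : Type*} [DistribLattice α] [CommRing R] [LinearOrder R] [IsStrictOrderedRing R]
  {μ g h : α → R}

lemma fkg_of_fintype [Fintype α] (hμ₀ : 0 ≤ μ) (hμ : ∀ a b, μ a * μ b ≤ μ (a ⊓ b) * μ (a ⊔ b))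
    (hg : Monotone g) (hh : Monotone h) :
    (∑ a, μ a * g a) * ∑ a, μ a * h a ≤ (∑ a, μ a) * ∑ a, μ a * (g a * h a) := by
  -- Both sides change by the same amount when a constant is subtracted from `g` or `h`, so the sign
  -- hypotheses of `fkg` can be met by subtracting lower bounds.
  obtain ⟨c, hc⟩ := (Set.finite_range g).bddBelow
  obtain ⟨d, hd⟩ := (Set.finite_range h).bddBelow
  have fkg_shifted := fkg (fun a ↦ g a - c) (fun a ↦ h a - d) μ hμ₀
    (fun a ↦ sub_nonneg.2 (hc ⟨a, rfl⟩)) (fun a ↦ sub_nonneg.2 (hd ⟨a, rfl⟩))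
    (fun _ _ hab ↦ sub_le_sub_right (hg hab) c) (fun _ _ hab ↦ sub_le_sub_right (hh hab) d) hμ
  have sum_shifted (k : α → R) (e : R) :
      ∑ a, μ a * (k a - e) = ∑ a, μ a * k a - (∑ a, μ a) * e := by
    simp only [mul_sub, sum_sub_distrib, sum_mul]
  have sum_shifted_mul : ∑ a, μ a * ((g a - c) * (h a - d)) =
      ∑ a, μ a * (g a * h a) - (∑ a, μ a * g a) * d - (∑ a, μ a * h a) * c
        + (∑ a, μ a) * (c * d) := by
    simp only [sum_mul, ← sum_sub_distrib, ← sum_add_distrib]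
    exact sum_congr rfl fun a _ ↦ by ring
  rw [sum_shifted, sum_shifted, sum_shifted_mul] at fkg_shifted
  linarith

variable {V : Finset α}

lemma fkg_of_finset (hμ₀ : ∀ a ∈ V, 0 ≤ μ a) (hμV : ∀ a, a ∉ V → μ a = 0)
    (hμ : ∀ a b, μ a * μ b ≤ μ (a ⊓ b) * μ (a ⊔ b)) (hg : Monotone g) (hh : Monotone h) :
    (∑ a ∈ V, μ a * g a) * ∑ a ∈ V, μ a * h a ≤
      (∑ a ∈ V, μ a) * ∑ a ∈ V, μ a * (g a * h a) := by
  classical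
  -- A finite subset of a distributive lattice generates a finite sublattice, where `fkg` applies.
  let L : Sublattice α := ⟨latticeClosure V, isSublattice_latticeClosure.1,
    isSublattice_latticeClosure.2⟩
  have hVL : V ⊆ V.finite_toSet.latticeClosure.toFinset := fun a ha ↦
    (Set.Finite.mem_toFinset _).2 (subset_latticeClosure ha)
  have : Fintype L := V.finite_toSet.latticeClosure.fintype
  have sum_eq (k : α → R) (hk : ∀ a, a ∉ V → k a = 0) : ∑ a ∈ V, k a = ∑ a : L, k a :=
    (sum_subset hVL fun a _ ↦ hk a).trans
      (sum_subtype _ (fun _ ↦ Set.Finite.mem_toFinset _) k)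
  have hμ_nonneg (a : α) : 0 ≤ μ a :=
    if ha : a ∈ V then hμ₀ a ha else (hμV a ha).ge
  have hμ_mul (k : α → R) (a : α) (ha : a ∉ V) : μ a * k a = 0 := by rw [hμV a ha, zero_mul]
  rw [sum_eq _ (hμ_mul g), sum_eq _ (hμ_mul h), sum_eq _ hμV,
    sum_eq _ (hμ_mul fun a ↦ g a * h a)]
  exact fkg_of_fintype (α := L) (fun a ↦ hμ_nonneg a) (fun a b ↦ hμ a b)
    (fun _ _ hab ↦ hg hab) (fun _ _ hab ↦ hh hab)

lemma sum_mul_sum_filter_le {p : α → Prop} [DecidablePred p] (hμ₀ : ∀ a ∈ V, 0 ≤ μ a)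
    (hμV : ∀ a, a ∉ V → μ a = 0) (hμ : ∀ a b, μ a * μ b ≤ μ (a ⊓ b) * μ (a ⊔ b))
    (hg : Monotone g) (hp : Monotone p) :
    (∑ a ∈ V, μ a * g a) * ∑ a ∈ V with p a, μ a ≤
      (∑ a ∈ V, μ a) * ∑ a ∈ V with p a, μ a * g a := by
  have indicator_mono : Monotone fun a ↦ if p a then (1 : R) else 0 := fun a b hab ↦ by
    by_cases ha : p a
    · simp only [ha, hp hab ha, le_refl]
    · simp only [ha, if_false]
      split_ifs <;> simp
  simpa only [mul_ite, mul_one, mul_zero, ← sum_filter] using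
    fkg_of_finset hμ₀ hμV hμ hg indicator_mono

end FKG

section ConditionalMean

variable {α K : Type*} [DistribLattice α] [Field K] [LinearOrder K] [IsStrictOrderedRing K]
  {V : Finset α} {μ g : α → K} {p : α → Prop} [DecidablePred p]

lemma mean_le_mean_filter (hμ₀ : ∀ a ∈ V, 0 ≤ μ a) (hμV : ∀ a, a ∉ V → μ a = 0)
    (hμ : ∀ a b, μ a * μ b ≤ μ (a ⊓ b) * μ (a ⊔ b)) (hg : Monotone g) (hp : Monotone p)
    (hpos : 0 < ∑ a ∈ V with p a, μ a) :
    (∑ a ∈ V, μ a * g a) / ∑ a ∈ V, μ a ≤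
      (∑ a ∈ V with p a, μ a * g a) / ∑ a ∈ V with p a, μ a := by
  have total_pos : 0 < ∑ a ∈ V, μ a := hpos.trans_le <|
    sum_le_sum_of_subset_of_nonneg (filter_subset p V) fun a ha _ ↦ hμ₀ a ha
  rw [div_le_div_iff₀ total_pos hpos, mul_comm _ (∑ a ∈ V, μ a)]
  exact sum_mul_sum_filter_le hμ₀ hμV hμ hg hp

lemma mean_filter_not_le_mean_filter (hμ₀ : ∀ a ∈ V, 0 ≤ μ a) (hμV : ∀ a, a ∉ V → μ a = 0)
    (hμ : ∀ a b, μ a * μ b ≤ μ (a ⊓ b) * μ (a ⊔ b)) (hg : Monotone g) (hp : Monotone p)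
    (hpos : 0 < ∑ a ∈ V with p a, μ a) (hpos_not : 0 < ∑ a ∈ V with ¬ p a, μ a) :
    (∑ a ∈ V with ¬ p a, μ a * g a) / ∑ a ∈ V with ¬ p a, μ a ≤
      (∑ a ∈ V with p a, μ a * g a) / ∑ a ∈ V with p a, μ a := by
  have correlation := sum_mul_sum_filter_le hμ₀ hμV hμ hg hp
  rw [← sum_filter_add_sum_filter_not V p μ,
    ← sum_filter_add_sum_filter_not V p fun a ↦ μ a * g a] at correlation
  rw [div_le_div_iff₀ hpos_not hpos]
  linarith

end ConditionalMean

theorem fkg_conditional_expectation_general {α β K : Type*} [DistribLattice α] [DistribLattice β]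
    [Field K] [LinearOrder K] [IsStrictOrderedRing K] (V : Finset (α × β)) (f g : α × β → K)
    (p : α × β → Prop) [DecidablePred p]
    (hf₀ : ∀ v ∈ V, 0 ≤ f v) (hfV : ∀ v, v ∉ V → f v = 0)
    (hf : ∀ v w, f v * f w ≤ f (v.1 ⊓ w.1, v.2 ⊔ w.2) * f (v.1 ⊔ w.1, v.2 ⊓ w.2))
    (hg : ∀ v w, v.1 ≤ w.1 → w.2 ≤ v.2 → g v ≤ g w)
    (hp : ∀ v w, v.1 ≤ w.1 → w.2 ≤ v.2 → p v → p w) :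
    (0 < ∑ v ∈ V with p v, f v →
      (∑ v ∈ V, f v * g v) / ∑ v ∈ V, f v ≤
        (∑ v ∈ V with p v, f v * g v) / ∑ v ∈ V with p v, f v) ∧
    (0 < ∑ v ∈ V with p v, f v → 0 < ∑ v ∈ V with ¬ p v, f v →
      (∑ v ∈ V with ¬ p v, f v * g v) / ∑ v ∈ V with ¬ p v, f v ≤
        (∑ v ∈ V with p v, f v * g v) / ∑ v ∈ V with p v, f v) := by
  let e : α × β ≃ α × βᵒᵈ := (Equiv.refl α).prodCongr OrderDual.toDual
  have hf₀' : ∀ a ∈ V.map e.toEmbedding, 0 ≤ f (e.symm a) := fun a ha ↦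
    hf₀ _ (mem_map_equiv.1 ha)
  have hfV' : ∀ a, a ∉ V.map e.toEmbedding → f (e.symm a) = 0 := fun a ha ↦
    hfV _ (mt mem_map_equiv.2 ha)
  have hf' (a b : α × βᵒᵈ) :
      f (e.symm a) * f (e.symm b) ≤ f (e.symm (a ⊓ b)) * f (e.symm (a ⊔ b)) :=
    hf (e.symm a) (e.symm b)
  have hg' : Monotone fun a ↦ g (e.symm a) := fun _ _ hab ↦ hg _ _ hab.1 hab.2
  have hp' : Monotone fun a ↦ p (e.symm a) := fun _ _ hab ↦ hp _ _ hab.1 hab.2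
  have mean_le := mean_le_mean_filter hf₀' hfV' hf' hg' hp'
  have mean_not_le := mean_filter_not_le_mean_filter hf₀' hfV' hf' hg' hp'
  simp only [filter_map, sum_map, Function.comp_def, Equiv.coe_toEmbedding,
    Equiv.symm_apply_apply] at mean_le mean_not_le
  exact ⟨mean_le, mean_not_le⟩

/-- FKG-type corollary: for a log-submodular probability mass function on
ℝ² with finite support, (i) `E[v1 | v1 ≥ v2] ≥ E[v1]`, and
(ii) `E[v1 | v1 ≥ v2] ≥ E[v1 | v1 < v2]`. -/
theorem fkg_conditional_expectation
    (V : Finset (ℝ × ℝ)) (f : ℝ × ℝ → ℝ)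
    (hV : V.Nonempty)
    (hfpos : ∀ v ∈ V, 0 < f v)
    (hfzero : ∀ v, v ∉ V → f v = 0)
    (hsum : ∑ v ∈ V, f v = 1)
    -- log-submodularity: f(v)·f(v') ≤ f(min v1 v1', max v2 v2')·f(max v1 v1', min v2 v2')
    (hlsm : ∀ v v' : ℝ × ℝ,
      f v * f v' ≤
        f (min v.1 v'.1, max v.2 v'.2) * f (max v.1 v'.1, min v.2 v'.2)) :
    -- (i)
    (0 < ∑ v ∈ V.filter (fun v => v.2 ≤ v.1), f v →
      (∑ v ∈ V, f v * v.1) ≤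
        (∑ v ∈ V.filter (fun v => v.2 ≤ v.1), f v * v.1) /
          (∑ v ∈ V.filter (fun v => v.2 ≤ v.1), f v)) ∧
    -- (ii)
    (0 < ∑ v ∈ V.filter (fun v => v.2 ≤ v.1), f v →
      0 < ∑ v ∈ V.filter (fun v => ¬ v.2 ≤ v.1), f v →
      (∑ v ∈ V.filter (fun v => ¬ v.2 ≤ v.1), f v * v.1) /
          (∑ v ∈ V.filter (fun v => ¬ v.2 ≤ v.1), f v) ≤
        (∑ v ∈ V.filter (fun v => v.2 ≤ v.1), f v * v.1) /
          (∑ v ∈ V.filter (fun v => v.2 ≤ v.1), f v)) := by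
  simpa only [hsum, div_one] using fkg_conditional_expectation_general V f Prod.fst
    (fun v ↦ v.2 ≤ v.1) (fun v hv ↦ (hfpos v hv).le) hfzero hlsm (fun _ _ h₁ _ ↦ h₁)
    (fun _ _ h₁ h₂ h ↦ h₂.trans (h.trans h₁))

end Screening
end
end
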